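/- Fix an integer q ≥ 2 and define the formal power series H ∈ ℚ[[z]] by H = Σ_{k≥0} h_k z^k with h_k = q^k·((q-1)k+1)^{k-1}/k!. Set ψ := z·H^{q-1} ∈ ℚ[[z]]. Then ψ has zero constant term and satisfies the Pólya equation ψ = z·exp(q(q-1)·ψ), where exp denotes the formal exponential Σ_{n≥0} (·)^n/n! applied to the power series q(q-1)ψ with zero constant term. -/

import Mathlib

open PowerSeries

/-- The formal exponential `exp F = ∑_{n≥0} Fⁿ/n!` of a formal power series `F ∈ ℚ[[z]]`
with zero constant term, given coefficient-wise. -/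
noncomputable def expPS (F : PowerSeries ℚ) : PowerSeries ℚ :=
  PowerSeries.mk fun n =>
    ∑ m ∈ Finset.range (n + 1), (PowerSeries.coeff n (F ^ m)) / (Nat.factorial m : ℚ)

open Polynomial in
/-- Scaled Abel polynomials. -/
noncomputable def abelP (q p : ℚ) : ℕ → Polynomial ℚ
  | 0 => 1
  | (n+1) => Polynomial.C (q ^ (n+1) / ((n+1).factorial : ℚ)) *
      (Polynomial.X * (Polynomial.X + Polynomial.C (p * ((n : ℚ)+1))) ^ n)

lemma abelP_eval_zero (q p : ℚ) (n : ℕ) : (abelP q p (n+1)).eval 0 = 0 := by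
  simp [abelP]

lemma abelP_deriv (q p : ℚ) (n : ℕ) : Polynomial.derivative (abelP q p (n+1)) =
    Polynomial.C q * (abelP q p n).comp (Polynomial.X + Polynomial.C p) := by
  cases n with
  | zero => simp [abelP]
  | succ n =>
    apply Polynomial.funext
    intro x
    have h : ((n+1+1).factorial : ℚ) = ((n:ℚ)+2) * ((n+1).factorial : ℚ) := by
      rw [Nat.factorial_succ (n+1)]; push_cast; ring
    have h0 : ((n+1).factorial : ℚ) ≠ 0 := by positivity
    have h2 : (n:ℚ)+2 ≠ 0 := by positivity
    simp [abelP, Polynomial.derivative_pow, h]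
    field_simp
    rw [show x + p + p * ((n:ℚ)+1) = x + p * ((n:ℚ)+1+1) by ring]
    ring

lemma poly_ext_deriv {f g : Polynomial ℚ}
    (hd : Polynomial.derivative f = Polynomial.derivative g) (h0 : f.eval 0 = g.eval 0) :
    f = g := by
  have h1 : Polynomial.derivative (f - g) = 0 := by simp [hd]
  have h2 := Polynomial.derivative_eq_zero.1 h1
  have h3 := Polynomial.eq_C_of_natDegree_eq_zero h2
  have h4 : (f - g).coeff 0 = 0 := by
    rw [Polynomial.coeff_zero_eq_eval_zero]; simp [h0]
  rw [h4] at h3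
  simpa [sub_eq_zero] using h3

lemma abelP_add (q p y : ℚ) (n : ℕ) :
    ∑ ij ∈ Finset.HasAntidiagonal.antidiagonal n,
      abelP q p ij.1 * Polynomial.C ((abelP q p ij.2).eval y)
      = (abelP q p n).comp (Polynomial.X + Polynomial.C y) := by
  induction n with
  | zero => simp [abelP]
  | succ n ih =>
    apply poly_ext_deriv
    · rw [Finset.Nat.antidiagonal_succ]
      simp only [Finset.sum_cons, Finset.sum_map, Polynomial.derivative_add,
        Polynomial.derivative_sum, Polynomial.derivative_comp]
      have e := congrArg (fun f => Polynomial.C q * f.comp (Polynomial.X + Polynomial.C p)) ih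
      simp only [Polynomial.sum_comp, Polynomial.mul_comp, Polynomial.C_comp,
        Finset.mul_sum, ← mul_assoc] at e
      have e0 : abelP q p 0 = 1 := rfl
      simp [abelP_deriv, Polynomial.derivative_mul, Polynomial.comp_assoc, e0] at e ⊢
      rw [e]
      congr 2
      ring
    · rw [Finset.Nat.antidiagonal_succ]
      simp [Polynomial.eval_finsetSum, abelP_eval_zero, abelP, Polynomial.eval_comp]

/-- evaluated series -/
noncomputable def abelA (q p y : ℚ) : PowerSeries ℚ :=
  PowerSeries.mk fun n => (abelP q p n).eval y

lemma abelA_add (q p x y : ℚ) : abelA q p x * abelA q p y = abelA q p (x + y) := by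
  ext n
  have e := congrArg (Polynomial.eval x) (abelP_add q p y n)
  simp [Polynomial.eval_finsetSum, Polynomial.eval_comp] at e
  simp [PowerSeries.coeff_mul, abelA, e]

lemma abelA_zero (q p : ℚ) : abelA q p 0 = 1 := by
  ext n
  cases n with
  | zero => simp [abelA, abelP]
  | succ n => simp [abelA, abelP_eval_zero, PowerSeries.coeff_one]

lemma abelA_pow (q p : ℚ) (k : ℕ) : abelA q p 1 ^ k = abelA q p k := by
  induction k with
  | zero => simp [abelA_zero]
  | succ k ih => rw [pow_succ, ih, abelA_add]; push_cast; rfl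

lemma abel_iter (q p : ℚ) (m n : ℕ) : Polynomial.derivative^[m] (abelP q p n) =
    PowerSeries.coeff n (PowerSeries.map Polynomial.C
      ((PowerSeries.C q * (PowerSeries.X * abelA q p p)) ^ m) *
      PowerSeries.mk (abelP q p)) := by
  have D : ∀ n, Polynomial.derivative (abelP q p n) =
    PowerSeries.coeff n (PowerSeries.map Polynomial.C
      (PowerSeries.C q * (PowerSeries.X * abelA q p p)) *
      PowerSeries.mk (abelP q p)) := by
    intro n
    rw [map_mul (PowerSeries.map _), map_mul (PowerSeries.map _), PowerSeries.map_C, PowerSeries.map_X, mul_assoc, mul_assoc,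
      PowerSeries.coeff_C_mul]
    cases n with
    | zero => simp [abelP]
    | succ n =>
      rw [PowerSeries.coeff_succ_X_mul, abelP_deriv, ← abelP_add, mul_comm (PowerSeries.map _ _),
        PowerSeries.coeff_mul]
      simp [abelA]
  induction m generalizing n with
  | zero => simp
  | succ m ih =>
    rw [Function.iterate_succ_apply', ih, pow_succ, map_mul (PowerSeries.map _), mul_assoc, PowerSeries.coeff_mul,
      PowerSeries.coeff_mul, Polynomial.derivative_sum]
    refine Finset.sum_congr rfl fun ij _ => ?_
    rw [PowerSeries.coeff_map, Polynomial.derivative_C_mul, PowerSeries.coeff_mk, D]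

lemma abel_coeff (q p : ℚ) (m n : ℕ) : (abelP q p n).coeff m =
    PowerSeries.coeff n ((PowerSeries.C q * (PowerSeries.X * abelA q p p)) ^ m)
      / (m.factorial : ℚ) := by
  have e := congrArg (Polynomial.eval 0) (abel_iter q p m n)
  rw [← Polynomial.coeff_zero_eq_eval_zero, Polynomial.coeff_iterate_derivative] at e
  rw [PowerSeries.coeff_mul, Polynomial.eval_finsetSum] at e
  have e2 := congrArg (PowerSeries.coeff n)
    (mul_one ((PowerSeries.C q * (PowerSeries.X * abelA q p p)) ^ m))
  rw [← abelA_zero q p, PowerSeries.coeff_mul] at e2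
  simp only [PowerSeries.coeff_map, Polynomial.eval_mul, Polynomial.eval_C,
    PowerSeries.coeff_mk, abelA] at e e2
  rw [e2] at e
  simp [Nat.descFactorial_self] at e
  have h0 : (m.factorial : ℚ) ≠ 0 := by positivity
  rw [eq_div_iff h0, mul_comm, e]
  rfl

lemma abel_exp (q p : ℚ) : abelA q p p =
    expPS ((q * p) • (PowerSeries.X * abelA q p p)) := by
  ext n
  have hz : ∀ m, n < m → (abelP q p n).coeff m = 0 := by
    intro m hm
    rw [abel_coeff, mul_left_comm, mul_pow, PowerSeries.coeff_X_pow_mul', if_neg (by omega)]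
    simp
  have hd : (abelP q p n).natDegree < n + 1 :=
    Nat.lt_succ_of_le (Polynomial.natDegree_le_iff_coeff_eq_zero.2 hz)
  rw [abelA, PowerSeries.coeff_mk, Polynomial.eval_eq_sum_range' hd, expPS, PowerSeries.coeff_mk]
  refine Finset.sum_congr rfl fun m _ => ?_
  rw [abel_coeff, ← PowerSeries.smul_eq_C_mul, smul_pow, smul_pow]
  simp [abelA]
  ring

/-- For `q ≥ 2` and `H = ∑ q^k((q-1)k+1)^(k-1)/k! · z^k`,
the series `ψ := z·H^(q-1)` has zero constant term and satisfies the Pólya equation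
`ψ = z·exp(q(q-1)·ψ)`. -/
theorem stmt_4 (q : ℕ) (hq : 2 ≤ q)
    (H : PowerSeries ℚ)
    (hH : H = PowerSeries.mk fun k =>
      (q : ℚ) ^ k * (((q - 1) * k + 1 : ℕ) : ℚ) ^ (k - 1) / (Nat.factorial k : ℚ))
    (ψ : PowerSeries ℚ) (hψ : ψ = PowerSeries.X * H ^ (q - 1)) :
    PowerSeries.constantCoeff ψ = 0
      ∧ ψ = PowerSeries.X * expPS (((q * (q - 1) : ℕ) : ℚ) • ψ) := by
  have hA : H = abelA q ((q - 1 : ℕ) : ℚ) 1 := by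
    rw [hH]
    ext k
    cases k with
    | zero => simp [abelA, abelP]
    | succ k =>
      simp [abelA, abelP]
      ring
  rw [hA, abelA_pow] at hψ
  subst hψ
  refine ⟨by simp, ?_⟩
  have e := abel_exp q ((q - 1 : ℕ) : ℚ)
  rw [Nat.cast_mul, ← e]
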